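/- Assume f satisfies (A1)–(A3) and fix χ > 0. There is ε₀ > 0 such that for all 0 < ε < ε₀: every weak ε-gpo {Ψ_{x̂_n}^{p_n}}_{n∈ℤ} shadows a unique element of M̂, i.e. there is exactly one x̂ ∈ M̂ with ϑ_n[x̂] ∈ Ψ_{x̂_n}([−p_n, p_n]) for all n ∈ ℤ. -/

import Mathlib

open Real MeasureTheory Filter Topology Metric Set

noncomputable section

namespace OneDim

/-- The interval `M = [0, 1/2]`. -/
def Mset : Set ℝ := Set.Icc 0 (1/2)

/-- Data of a piecewise `C^{1+β}` interval map `f : M → M` with discontinuity set `D`,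
constants `β ∈ (0,1)`, `a, K > 1`, radius function `r` and inverse branches `g`. -/
structure GoodMap where
  f : ℝ → ℝ
  D : Set ℝ
  β : ℝ
  a : ℝ
  K : ℝ
  r : ℝ → ℝ
  g : ℝ → ℝ → ℝ
  hβ0 : 0 < β
  hβ1 : β < 1
  ha : 1 < a
  hK : 1 < K
  hmaps : ∀ x ∈ Mset, f x ∈ Mset
  hD : D ⊆ Mset
  hdiff : DifferentiableOn ℝ f (Mset \ D)

namespace GoodMap

/-- The critical set `C = {x ∈ M \ D : df_x = 0}`. -/
def crit (F : GoodMap) : Set ℝ := {x | x ∈ Mset \ F.D ∧ deriv F.f x = 0}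

/-- The singular set `S = C ∪ D`. -/
def S (F : GoodMap) : Set ℝ := F.crit ∪ F.D

/-- Distance to the singular set. -/
def dS (F : GoodMap) (x : ℝ) : ℝ := Metric.infDist x F.S

/-- Conditions (A1)–(A3). -/
def SatA (F : GoodMap) : Prop :=
  ∀ x ∈ Mset, x ∉ F.S → F.f x ∉ F.S →
    (min (F.dS x ^ F.a) (F.dS (F.f x) ^ F.a) < F.r x ∧ F.r x < 1) ∧
    -- (A1)
    (Set.InjOn F.f (Metric.ball x (2 * F.r x)) ∧
      (∀ y ∈ Metric.ball x (2 * F.r x), DifferentiableAt ℝ F.f y) ∧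
      F.g x (F.f x) = x ∧
      (∀ z ∈ Metric.ball (F.f x) (2 * F.r x), F.f (F.g x z) = z) ∧
      Set.InjOn (F.g x) (Metric.ball (F.f x) (2 * F.r x)) ∧
      (∀ z ∈ Metric.ball (F.f x) (2 * F.r x), DifferentiableAt ℝ (F.g x) z)) ∧
    -- (A2)
    ((∀ y ∈ Metric.ball x (2 * F.r x),
        F.dS x ^ F.a ≤ |deriv F.f y| ∧ |deriv F.f y| ≤ F.dS x ^ (-F.a)) ∧
      (∀ z ∈ Metric.ball (F.f x) (2 * F.r x),
        F.dS x ^ F.a ≤ |deriv (F.g x) z| ∧ |deriv (F.g x) z| ≤ F.dS x ^ (-F.a))) ∧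
    -- (A3)
    ((∀ y ∈ Metric.ball x (2 * F.r x), ∀ z ∈ Metric.ball x (2 * F.r x),
        |deriv F.f y - deriv F.f z| ≤ F.K * |y - z| ^ F.β) ∧
      (∀ y ∈ Metric.ball (F.f x) (2 * F.r x), ∀ z ∈ Metric.ball (F.f x) (2 * F.r x),
        |deriv (F.g x) y - deriv (F.g x) z| ≤ F.K * |y - z| ^ F.β))

end GoodMap

/-- Membership in the natural extension space `M̂`. -/
def inMhat (f : ℝ → ℝ) (x : ℤ → ℝ) : Prop :=
  (∀ n, x n ∈ Mset) ∧ ∀ n : ℤ, f (x (n - 1)) = x n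

/-- The natural extension map `f̂` (left shift). -/
def fhat (x : ℤ → ℝ) : ℤ → ℝ := fun n => x (n + 1)

/-- Iterate `f̂^k` of the natural extension map, `k ∈ ℤ`. -/
def fhatI (k : ℤ) (x : ℤ → ℝ) : ℤ → ℝ := fun n => x (n + k)

/-- The metric `d̂(x̂,ŷ) = sup{2^n d(x_n,y_n) : n ≤ 0}` on `M̂`. -/
def dhat (x y : ℤ → ℝ) : ℝ :=
  sSup {t : ℝ | ∃ n : ℤ, n ≤ 0 ∧ t = (2:ℝ) ^ n * |x n - y n|}

/-- The invertible derivative cocycle `d̂f^{(n)}` over `f̂`. -/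
def dfhat (f : ℝ → ℝ) (x : ℤ → ℝ) (n : ℤ) : ℝ :=
  if 0 ≤ n then ∏ j ∈ Finset.range n.toNat, deriv f (x (j : ℤ))
  else (∏ j ∈ Finset.range (-n).toNat, deriv f (x (-(j : ℤ) - 1)))⁻¹

/-- The Pesin parameter `u(x̂)`. -/
def uPes (f : ℝ → ℝ) (χ : ℝ) (x : ℤ → ℝ) : ℝ :=
  Real.sqrt (∑' n : ℕ, Real.exp (2 * (n:ℝ) * χ) * (dfhat f x (-(n:ℤ))) ^ 2)

/-- The Pesin chart `Ψ_{x̂}(t) = t/u(x̂) + x₀`. -/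
def Psi (f : ℝ → ℝ) (χ : ℝ) (x : ℤ → ℝ) (t : ℝ) : ℝ := t / uPes f χ x + x 0

/-- The set `NUE_χ`. -/
def NUE (F : GoodMap) (χ : ℝ) : Set (ℤ → ℝ) :=
  {x | inMhat F.f x ∧ (∀ n, x n ∉ F.S) ∧
    (∃ l > χ, Tendsto (fun n : ℕ => Real.log |dfhat F.f x (n:ℤ)| / (n:ℝ)) atTop (𝓝 l)) ∧
    (∃ l > χ, Tendsto (fun n : ℕ => Real.log |dfhat F.f x (-(n:ℤ))| / (-(n:ℝ))) atTop (𝓝 l))}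

/-- `ρ(x̂) = d({x₋₁,x₀,x₁}, S)`. -/
def rho (F : GoodMap) (x : ℤ → ℝ) : ℝ :=
  min (F.dS (x (-1))) (min (F.dS (x 0)) (F.dS (x 1)))

/-- `I_ε = {e^{-εn/3} : n ≥ 0}`. -/
def Ieps (ε : ℝ) : Set ℝ := {q | ∃ n : ℕ, q = Real.exp (-(ε * n) / 3)}

/-- `Q̃_ε(x̂)`. -/
def Qtilde (F : GoodMap) (χ ε : ℝ) (x : ℤ → ℝ) : ℝ :=
  ε ^ (3 / F.β) *
    min (uPes F.f χ x ^ (-(24 / F.β)))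
      (uPes F.f χ (fhatI (-1) x) ^ (-(12 / F.β)) * rho F x ^ (72 * F.a / F.β))

/-- `Q_ε(x̂) = max{q ∈ I_ε : q ≤ Q̃_ε(x̂)}`. -/
def Qeps (F : GoodMap) (χ ε : ℝ) (x : ℤ → ℝ) : ℝ :=
  sSup {q | q ∈ Ieps ε ∧ q ≤ Qtilde F χ ε x}

/-- The regular set. -/
def Reg (F : GoodMap) : Set (ℤ → ℝ) :=
  {x | inMhat F.f x ∧ (∀ n, x n ∉ F.S) ∧
    Tendsto (fun n : ℕ => Real.log (F.dS (x (n:ℤ))) / (n:ℝ)) atTop (𝓝 0) ∧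
    Tendsto (fun n : ℕ => Real.log (F.dS (x (-(n:ℤ)))) / (n:ℝ)) atTop (𝓝 0)}

/-- The set `NUE*_χ`. -/
def NUEstar (F : GoodMap) (χ : ℝ) : Set (ℤ → ℝ) :=
  {x | x ∈ NUE F χ ∧ x ∈ Reg F ∧
    (∃ nk : ℕ → ℤ, Tendsto nk atTop atBot ∧
      Tendsto (fun k => uPes F.f χ (fhatI (nk k) x)) atTop (𝓝 (uPes F.f χ x))) ∧
    Tendsto (fun n : ℕ => Real.log (uPes F.f χ (fhatI (-(n:ℤ)) x)) / (-(n:ℝ))) atTop (𝓝 0)}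

/-- An ε-chart is a pair `(x̂, p)`, representing `Ψ_{x̂}` restricted to `[-p,p]`. -/
structure Chart where
  x : ℤ → ℝ
  p : ℝ

/-- `(x̂, p)` is a genuine ε-chart. -/
def IsChart (F : GoodMap) (χ ε : ℝ) (c : Chart) : Prop :=
  c.x ∈ NUE F χ ∧ 0 < c.p ∧ c.p ≤ Qeps F χ ε c.x

/-- ε-overlap of two ε-charts. -/
def Overlap (F : GoodMap) (χ ε : ℝ) (c₁ c₂ : Chart) : Prop :=
  Real.exp (-ε) ≤ c₁.p / c₂.p ∧ c₁.p / c₂.p ≤ Real.exp ε ∧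
  |c₁.x 0 - c₂.x 0| + |(uPes F.f χ c₁.x)⁻¹ - (uPes F.f χ c₂.x)⁻¹| < (c₁.p * c₂.p) ^ 4

/-- `g_{x̂} = g_{x₋₁}`, the inverse branch of `f` taking `x₀` to `x₋₁`. -/
def ghat (F : GoodMap) (x : ℤ → ℝ) : ℝ → ℝ := F.g (x (-1))

/-- `G_{x̂} = Ψ_{f̂⁻¹x̂}⁻¹ ∘ g_{x̂} ∘ Ψ_{x̂}`. -/
def Gmap (F : GoodMap) (χ : ℝ) (x : ℤ → ℝ) (t : ℝ) : ℝ :=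
  uPes F.f χ (fhatI (-1) x) * (ghat F x (Psi F.f χ x t) - x (-1))

/-- `G_{x̂,ŷ} = Ψ_{ŷ}⁻¹ ∘ g_{x̂} ∘ Ψ_{x̂}`. -/
def Gmap2 (F : GoodMap) (χ : ℝ) (x y : ℤ → ℝ) (t : ℝ) : ℝ :=
  uPes F.f χ y * (ghat F x (Psi F.f χ x t) - y 0)

/-- `F_{x̂} = Ψ_{f̂x̂}⁻¹ ∘ f ∘ Ψ_{x̂}`. -/
def Fmap (F : GoodMap) (χ : ℝ) (x : ℤ → ℝ) (t : ℝ) : ℝ :=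
  uPes F.f χ (fhat x) * (F.f (Psi F.f χ x t) - x 1)

/-- `δ_ε = e^{-εn}` where `n` is the unique positive integer with `e^{-εn} < ε ≤ e^{-ε(n-1)}`. -/
def deltaEps (ε : ℝ) : ℝ :=
  Real.exp (-(ε * ((⌊Real.log (1 / ε) / ε⌋ + 1 : ℤ) : ℝ)))

/-- Weak edge `v ⤎ w` (from `w = Ψ_{x̂}^p` to `v = Ψ_{ŷ}^q`). -/
def WeakEdge (F : GoodMap) (χ ε : ℝ) (v w : Chart) : Prop :=
  IsChart F χ ε v ∧ IsChart F χ ε w ∧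
  Overlap F χ ε ⟨fhatI (-1) w.x, v.p⟩ v ∧
  w.p ≤ Real.exp ε * v.p

/-- Edge `v ← w` (from `w = Ψ_{x̂}^p` to `v = Ψ_{ŷ}^q`). -/
def Edge (F : GoodMap) (χ ε : ℝ) (v w : Chart) : Prop :=
  IsChart F χ ε v ∧ IsChart F χ ε w ∧
  Overlap F χ ε ⟨fhatI (-1) w.x, v.p⟩ v ∧
  |v.x 1 - w.x 0| < v.p ∧
  Real.exp (-v.p) ≤ uPes F.f χ (fhat v.x) / uPes F.f χ w.x ∧
  uPes F.f χ (fhat v.x) / uPes F.f χ w.x ≤ Real.exp v.p ∧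
  w.p = min (Real.exp ε * v.p) (deltaEps ε * Qeps F χ ε w.x)

/-- ε-generalized pseudo-orbit. -/
def IsGPO (F : GoodMap) (χ ε : ℝ) (v : ℤ → Chart) : Prop :=
  ∀ n : ℤ, Edge F χ ε (v n) (v (n + 1))

/-- weak ε-generalized pseudo-orbit. -/
def IsWeakGPO (F : GoodMap) (χ ε : ℝ) (v : ℤ → Chart) : Prop :=
  ∀ n : ℤ, WeakEdge F χ ε (v n) (v (n + 1))

/-- The range `Ψ_{x̂}([-p,p])` of an ε-chart. -/
def chartRange (F : GoodMap) (χ : ℝ) (c : Chart) : Set ℝ :=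
  Psi F.f χ c.x '' Set.Icc (-c.p) c.p

/-- A bi-infinite sequence of ε-charts shadows `x̂ ∈ M̂`. -/
def Shadows (F : GoodMap) (χ : ℝ) (v : ℤ → Chart) (x : ℤ → ℝ) : Prop :=
  inMhat F.f x ∧ ∀ n : ℤ, x n ∈ chartRange F χ (v n)

/-- `q_ε(x̂) = δ_ε inf{e^{ε|m|} Q_ε(f̂^m x̂) : m ≤ 0}`. -/
def qeps (F : GoodMap) (χ ε : ℝ) (x : ℤ → ℝ) : ℝ :=
  deltaEps ε *
    sInf {t : ℝ | ∃ m : ℤ, m ≤ 0 ∧ t = Real.exp (ε * |(m:ℝ)|) * Qeps F χ ε (fhatI m x)}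

/-- Recurrence: some symbol repeats infinitely often in the future and some in the past. -/
def Recurrent {V : Type*} (v : ℤ → V) : Prop :=
  (∃ c, {n : ℤ | 0 < n ∧ v n = c}.Infinite) ∧ ∃ c, {n : ℤ | n < 0 ∧ v n = c}.Infinite

/-- The distance `d(v,w) = exp(-min{|n| : v_n ≠ w_n})` on sequence spaces. -/
def dSigma {V : Type*} (v w : ℤ → V) : ℝ :=
  sSup {t : ℝ | ∃ n : ℤ, v n ≠ w n ∧ t = Real.exp (-|(n:ℝ)|)}

/-- Sup norm over a set. -/
def supNorm (h : ℝ → ℝ) (I : Set ℝ) : ℝ := sSup ((fun t => |h t|) '' I)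

/-- Hölder constant over a set. -/
def holConst (γ : ℝ) (h : ℝ → ℝ) (I : Set ℝ) : ℝ :=
  sSup {r : ℝ | ∃ t ∈ I, ∃ s ∈ I, t ≠ s ∧ r = |h t - h s| / |t - s| ^ γ}

/-!
Read in Pesin charts, the inverse branch of `f` along a weak edge maps each chart into the preceding
one and contracts at a rate near `e^{-χ}`, so exactly one orbit of `f` on the real line stays in the
charts. Chart ranges may stick out of `M`, hence so may this orbit. But once outside, it was outside
at all earlier times because `f` preserves `M`, and `f` maps each endpoint of `M` nearest to a past
point to the next such endpoint. Only two endpoints being available, the current one is also mapped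
to an endpoint, and monotonicity of `f` on the chart forbids a return to `M`. Thus the whole orbit
is outside `M`, and its nearest endpoints form a second orbit in the charts, contradicting
uniqueness.
-/

section General

theorem existsUnique_forall_eq_apply_of_lipschitzWith {ι : Type*} (σ : ι → ι) {X : ι → Type*}
    [∀ i, MetricSpace (X i)] [∀ i, CompleteSpace (X i)] [∀ i, Nonempty (X i)]
    {C : ℝ} (hC : ∀ i (a b : X i), dist a b ≤ C) {θ : NNReal} (hθ : θ < 1)
    (T : ∀ i, X (σ i) → X i) (hT : ∀ i, LipschitzWith θ (T i)) :
    ∃! x : ∀ i, X i, ∀ i, x i = T i (x (σ i)) := by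
  let Φ : (∀ i, X i) → ∀ i, X i := fun x i => T i (x (σ i))
  have dist_iterate_le : ∀ (k : ℕ) (x y : ∀ i, X i) (i : ι),
      dist (Φ^[k] x i) (Φ^[k] y i) ≤ C * θ ^ k := by
    intro k x y
    induction k with
    | zero => intro i; simpa using hC i (x i) (y i)
    | succ k ih =>
      intro i
      rw [Function.iterate_succ_apply', Function.iterate_succ_apply']
      calc dist (T i (Φ^[k] x (σ i))) (T i (Φ^[k] y (σ i)))
          ≤ θ * dist (Φ^[k] x (σ i)) (Φ^[k] y (σ i)) := (hT i).dist_le_mul _ _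
        _ ≤ θ * (C * θ ^ k) := by gcongr; exact ih (σ i)
        _ = C * θ ^ (k + 1) := by ring
  let c : ∀ i, X i := fun i => Classical.arbitrary (X i)
  have cauchySeq_iterate : ∀ i, CauchySeq fun k => Φ^[k] c i := fun i =>
    cauchySeq_of_le_geometric θ C (mod_cast hθ) fun k => by
      rw [Function.iterate_succ_apply]
      exact dist_iterate_le k c (Φ c) i
  choose x hx using fun i => cauchySeq_tendsto_of_complete (cauchySeq_iterate i)
  have isFixed_x : Φ x = x := by
    funext i
    refine tendsto_nhds_unique (((hT i).continuous.tendsto _).comp (hx (σ i))) ?_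
    refine ((hx i).comp (tendsto_add_atTop_nat 1)).congr fun k => ?_
    exact congrFun (Function.iterate_succ_apply' Φ k c) i
  refine ⟨x, fun i => (congrFun isFixed_x i).symm, fun y hy => funext fun i => ?_⟩
  have isFixed_y : Φ y = y := funext fun i => (hy i).symm
  have tendsto_bound : Tendsto (fun k : ℕ => C * (θ : ℝ) ^ k) atTop (𝓝 0) := by
    simpa using (tendsto_pow_atTop_nhds_zero_of_lt_one θ.2 (mod_cast hθ)).const_mul C
  refine dist_le_zero.1 (ge_of_tendsto' tendsto_bound fun k => ?_)
  simpa only [Function.iterate_fixed isFixed_x, Function.iterate_fixed isFixed_y]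
    using dist_iterate_le k y x i

theorem apply_mem_uIoo_of_injOn {α δ : Type*} [ConditionallyCompleteLinearOrder α]
    [DenselyOrdered α] [TopologicalSpace α] [OrderTopology α] [LinearOrder δ] [TopologicalSpace δ]
    [OrderClosedTopology δ] {f : α → δ} {a b x : α} (hcont : ContinuousOn f (uIcc a b))
    (hinj : InjOn f (uIcc a b)) (hx : x ∈ uIoo a b) : f x ∈ uIoo (f a) (f b) := by
  wlog hab : a ≤ b generalizing a b
  · rw [uIoo_comm]
    exact this (uIcc_comm a b ▸ hcont) (uIcc_comm a b ▸ hinj) (uIoo_comm a b ▸ hx)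
      (le_of_not_ge hab)
  rw [uIcc_of_le hab] at hcont hinj
  rw [uIoo_of_le hab] at hx
  have ha : a ∈ Icc a b := left_mem_Icc.2 hab
  have hb : b ∈ Icc a b := right_mem_Icc.2 hab
  have hx' : x ∈ Icc a b := Ioo_subset_Icc_self hx
  rcases ContinuousOn.strictMonoOn_of_injOn_Icc' hab hcont hinj with hf | hf
  · exact mem_uIoo_of_lt (hf ha hx' hx.1) (hf hx' hb hx.2)
  · exact mem_uIoo_of_gt (hf hx' hb hx.2) (hf ha hx' hx.1)

theorem coe_projIcc_mem_pair_of_notMem {α : Type*} [LinearOrder α] {a b y : α} (h : a ≤ b)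
    (hy : y ∉ Icc a b) : (projIcc a b h y : α) ∈ ({a, b} : Set α) := by
  rcases lt_or_ge y a with hya | hay
  · simp [projIcc_of_le_left h hya.le]
  · simp [projIcc_of_right_le h (not_le.1 fun hyb => hy ⟨hay, hyb⟩).le]

theorem coe_projIcc_mem_uIoo_of_notMem {α : Type*} [LinearOrder α] {a b m y : α} (h : a ≤ b)
    (hm : m ∈ Ioo a b) (hy : y ∉ Icc a b) : (projIcc a b h y : α) ∈ uIoo y m := by
  rcases lt_or_ge y a with hya | hay
  · rw [projIcc_of_le_left h hya.le]
    exact mem_uIoo_of_lt hya hm.1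
  · have hby : b < y := not_le.1 fun hyb => hy ⟨hay, hyb⟩
    rw [projIcc_of_right_le h hby.le]
    exact mem_uIoo_of_gt hm.2 hby

theorem abs_coe_projIcc_sub_le {a b c : ℝ} (h : a ≤ b) (hc : c ∈ Icc a b) (y : ℝ) :
    |(projIcc a b h y : ℝ) - c| ≤ |y - c| := by
  simpa [projIcc_of_mem h hc, Subtype.dist_eq, Real.dist_eq] using
    (LipschitzWith.projIcc h).dist_le_mul y c

/-- `f` is strictly monotone across the projection of `y`, and maps the inside to the inside. -/
theorem apply_notMem_Icc_of_apply_projIcc_mem_pair {f : ℝ → ℝ} {a b y : ℝ} {s : Set ℝ}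
    (h : a ≤ b) (hs : s.OrdConnected) (hsab : (s ∩ Ioo a b).Nonempty)
    (hcont : ContinuousOn f s) (hinj : InjOn f s) (hf : MapsTo f (Icc a b) (Icc a b))
    (hys : y ∈ s) (hy : y ∉ Icc a b) (hfy : f (projIcc a b h y) ∈ ({a, b} : Set ℝ)) :
    f y ∉ Icc a b := by
  obtain ⟨m, hms, hm⟩ := hsab
  have hsub : uIcc y m ⊆ s := hs.uIcc_subset hys hms
  intro hfyI
  have hmem : f (projIcc a b h y) ∈ Ioo a b :=
    uIoo_subset_Ioo hfyI (hf (Ioo_subset_Icc_self hm)) <|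
      apply_mem_uIoo_of_injOn (hcont.mono hsub) (hinj.mono hsub)
        (coe_projIcc_mem_uIoo_of_notMem h hm hy)
  rcases hfy with hfa | hfb
  · exact hmem.1.ne' hfa
  · exact hmem.2.ne hfb

theorem apply_mem_pair_of_two_step {α : Type*} {f : α → α} {p q x y z : α}
    (hx : x ∈ ({p, q} : Set α)) (hy : y ∈ ({p, q} : Set α)) (hz : z ∈ ({p, q} : Set α))
    (hxy : f x = y) (hyz : f y = z) : f z ∈ ({p, q} : Set α) := by
  simp only [mem_insert_iff, mem_singleton_iff] at *
  grind

end General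

section PesinParameter

variable {f : ℝ → ℝ} {χ : ℝ} {x : ℤ → ℝ}

theorem dfhat_neg_natCast (f : ℝ → ℝ) (x : ℤ → ℝ) (n : ℕ) :
    dfhat f x (-(n : ℤ)) = (∏ j ∈ Finset.range n, deriv f (x (-(j : ℤ) - 1)))⁻¹ := by
  rcases Nat.eq_zero_or_pos n with rfl | hn
  · simp [dfhat]
  · rw [dfhat, if_neg (by omega), neg_neg, Int.toNat_natCast]

theorem dfhat_neg_natCast_succ (f : ℝ → ℝ) (x : ℤ → ℝ) (n : ℕ) :
    dfhat f x (-((n + 1 : ℕ) : ℤ)) =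
      (deriv f (x (-1)))⁻¹ * dfhat f (fhatI (-1) x) (-(n : ℤ)) := by
  rw [dfhat_neg_natCast, dfhat_neg_natCast, Finset.prod_range_succ', mul_inv, mul_comm]
  have shift (j : ℕ) : x (-((j + 1 : ℕ) : ℤ) - 1) = fhatI (-1) x (-(j : ℤ) - 1) := by
    simp only [fhatI]
    congr 1
    push_cast
    ring
  simp only [shift, Nat.cast_zero, neg_zero, zero_sub]

/-- `u(x̂) ≠ 0` encodes convergence of the defining series, as the sum of a divergent one is `0`. -/
theorem uPes_sq (hu : uPes f χ x ≠ 0) :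
    uPes f χ x ^ 2 =
      1 + (exp χ * |(deriv f (x (-1)))⁻¹| * uPes f χ (fhatI (-1) x)) ^ 2 := by
  let term : (ℤ → ℝ) → ℕ → ℝ := fun z n => exp (2 * (n : ℝ) * χ) * dfhat f z (-(n : ℤ)) ^ 2
  have term_nonneg (z n) : 0 ≤ term z n := by positivity
  have sq_eq (z) : uPes f χ z ^ 2 = ∑' n, term z n := sq_sqrt (tsum_nonneg (term_nonneg z))
  have term_zero : term x 0 = 1 := by simp [term, dfhat]
  have term_succ (n) :
      term x (n + 1) = (exp χ * (deriv f (x (-1)))⁻¹) ^ 2 * term (fhatI (-1) x) n := by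
    have exp_succ : exp (2 * ((n + 1 : ℕ) : ℝ) * χ) = exp χ ^ 2 * exp (2 * (n : ℝ) * χ) := by
      rw [← exp_nat_mul, ← exp_add]
      push_cast
      ring_nf
    simp only [term, dfhat_neg_natCast_succ, exp_succ]
    ring
  have summable_term : Summable (term x) := by
    by_contra h
    refine hu (pow_eq_zero_iff two_ne_zero |>.1 ?_)
    rw [sq_eq, tsum_eq_zero_of_not_summable h]
  rw [sq_eq, summable_term.tsum_eq_zero_add, term_zero, tsum_congr term_succ, tsum_mul_left,
    ← sq_eq, mul_pow, mul_pow, mul_pow, sq_abs]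

theorem uPes_nonneg : 0 ≤ uPes f χ x := sqrt_nonneg _

theorem one_le_uPes (hu : uPes f χ x ≠ 0) : 1 ≤ uPes f χ x := by
  rw [← one_le_sq_iff₀ uPes_nonneg, uPes_sq hu]
  exact le_add_of_nonneg_right (sq_nonneg _)

theorem uPes_fhatI_neg_one_mul_le (hu : uPes f χ x ≠ 0) :
    uPes f χ (fhatI (-1) x) * |(deriv f (x (-1)))⁻¹| ≤ exp (-χ) * uPes f χ x := by
  have h : exp χ * |(deriv f (x (-1)))⁻¹| * uPes f χ (fhatI (-1) x) ≤ uPes f χ x :=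
    le_of_sq_le_sq (by rw [uPes_sq hu]; exact le_add_of_nonneg_left zero_le_one) uPes_nonneg
  rw [exp_neg, inv_mul_eq_div, le_div_iff₀ (exp_pos χ)]
  linarith

end PesinParameter

section RegularPoints

variable {F : GoodMap} {x y z z' R : ℝ}

namespace GoodMap

theorem S_subset_Mset (F : GoodMap) : F.S ⊆ Mset :=
  union_subset (fun _ hx => hx.1.1) F.hD

theorem dS_le_half (F : GoodMap) (hx : x ∈ Mset) : F.dS x ≤ 1 / 2 := by
  rcases F.S.eq_empty_or_nonempty with hS | ⟨s, hs⟩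
  · rw [dS, hS, infDist_empty]
    norm_num
  · calc F.dS x ≤ dist x s := infDist_le_dist_of_mem hs
      _ ≤ 1 / 2 - 0 := Real.dist_le_of_mem_Icc hx (F.S_subset_Mset hs)
      _ = 1 / 2 := sub_zero _

/-- The points of `M` at which assumptions (A1)–(A3) make a claim. -/
structure IsRegular (F : GoodMap) (x : ℝ) : Prop where
  mem_Mset : x ∈ Mset
  notMem_S : x ∉ F.S
  map_notMem_S : F.f x ∉ F.S

theorem IsRegular.deriv_ne_zero (hx : F.IsRegular x) : deriv F.f x ≠ 0 := fun h =>
  hx.notMem_S <| .inl ⟨⟨hx.mem_Mset, fun hD => hx.notMem_S (.inr hD)⟩, h⟩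

namespace SatA

theorem min_rpow_lt_r (hA : F.SatA) (hx : F.IsRegular x) :
    min (F.dS x ^ F.a) (F.dS (F.f x) ^ F.a) < F.r x :=
  (hA x hx.1 hx.2 hx.3).1.1

theorem injOn_ball (hA : F.SatA) (hx : F.IsRegular x) : InjOn F.f (ball x (2 * F.r x)) :=
  (hA x hx.1 hx.2 hx.3).2.1.1

theorem differentiableAt (hA : F.SatA) (hx : F.IsRegular x) (hy : y ∈ ball x (2 * F.r x)) :
    DifferentiableAt ℝ F.f y :=
  (hA x hx.1 hx.2 hx.3).2.1.2.1 y hy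

theorem g_map_self (hA : F.SatA) (hx : F.IsRegular x) : F.g x (F.f x) = x :=
  (hA x hx.1 hx.2 hx.3).2.1.2.2.1

theorem map_g (hA : F.SatA) (hx : F.IsRegular x) (hz : z ∈ ball (F.f x) (2 * F.r x)) :
    F.f (F.g x z) = z :=
  (hA x hx.1 hx.2 hx.3).2.1.2.2.2.1 z hz

theorem differentiableAt_g (hA : F.SatA) (hx : F.IsRegular x)
    (hz : z ∈ ball (F.f x) (2 * F.r x)) : DifferentiableAt ℝ (F.g x) z :=
  (hA x hx.1 hx.2 hx.3).2.1.2.2.2.2.2 z hz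

theorem abs_deriv_le (hA : F.SatA) (hx : F.IsRegular x) (hy : y ∈ ball x (2 * F.r x)) :
    |deriv F.f y| ≤ F.dS x ^ (-F.a) :=
  ((hA x hx.1 hx.2 hx.3).2.2.1.1 y hy).2

theorem abs_deriv_g_sub_le (hA : F.SatA) (hx : F.IsRegular x)
    (hz : z ∈ ball (F.f x) (2 * F.r x)) (hz' : z' ∈ ball (F.f x) (2 * F.r x)) :
    |deriv (F.g x) z - deriv (F.g x) z'| ≤ F.K * |z - z'| ^ F.β :=
  (hA x hx.1 hx.2 hx.3).2.2.2.2 z hz z' hz'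

theorem deriv_g (hA : F.SatA) (hx : F.IsRegular x) (hr : 0 < F.r x) :
    deriv (F.g x) (F.f x) = (deriv F.f x)⁻¹ := by
  have hr2 : 0 < 2 * F.r x := by positivity
  have hf : HasDerivAt F.f (deriv F.f x) (F.g x (F.f x)) := by
    rw [hA.g_map_self hx]
    exact (hA.differentiableAt hx (mem_ball_self hr2)).hasDerivAt
  refine (hf.of_local_left_inverse
    (hA.differentiableAt_g hx (mem_ball_self hr2)).continuousAt hx.deriv_ne_zero ?_).deriv
  filter_upwards [ball_mem_nhds (F.f x) hr2] with z hz using hA.map_g hx hz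

theorem abs_f_sub_le (hA : F.SatA) (hx : F.IsRegular x) (hy : y ∈ ball x (2 * F.r x)) :
    |F.f y - F.f x| ≤ F.dS x ^ (-F.a) * |y - x| :=
  (convex_ball x _).norm_image_sub_le_of_norm_deriv_le (fun _ h => hA.differentiableAt hx h)
    (fun _ h => hA.abs_deriv_le hx h) (mem_ball_self (pos_of_mem_ball hy)) hy

theorem abs_g_sub_le (hA : F.SatA) (hx : F.IsRegular x) (hR : R < 2 * F.r x)
    (hz : z ∈ closedBall (F.f x) R) (hz' : z' ∈ closedBall (F.f x) R) :
    |F.g x z - F.g x z'| ≤ (|(deriv F.f x)⁻¹| + F.K * R ^ F.β) * |z - z'| := by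
  have hr : 0 < F.r x := by linarith [nonneg_of_mem_closedBall hz]
  have hsub : closedBall (F.f x) R ⊆ ball (F.f x) (2 * F.r x) := closedBall_subset_ball hR
  refine (convex_closedBall (F.f x) R).norm_image_sub_le_of_norm_deriv_le
    (fun ξ hξ => hA.differentiableAt_g hx (hsub hξ)) (fun ξ hξ => ?_) hz' hz
  have hK := zero_le_one.trans F.hK.le
  have hβ := F.hβ0.le
  have hξR : |ξ - F.f x| ≤ R := hξ
  calc |deriv (F.g x) ξ|
      ≤ |deriv (F.g x) (F.f x)| + |deriv (F.g x) ξ - deriv (F.g x) (F.f x)| := by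
        linarith [abs_sub_abs_le_abs_sub (deriv (F.g x) ξ) (deriv (F.g x) (F.f x))]
    _ ≤ |deriv (F.g x) (F.f x)| + F.K * |ξ - F.f x| ^ F.β := by
        gcongr
        exact hA.abs_deriv_g_sub_le hx (hsub hξ) (mem_ball_self (by positivity))
    _ ≤ |(deriv F.f x)⁻¹| + F.K * R ^ F.β := by
        rw [hA.deriv_g hx hr]
        gcongr

end SatA

end GoodMap

end RegularPoints

section Charts

variable {F : GoodMap} {χ ε : ℝ}

theorem rho_nonneg (F : GoodMap) (x : ℤ → ℝ) : 0 ≤ rho F x :=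
  le_min infDist_nonneg (le_min infDist_nonneg infDist_nonneg)

theorem rho_le_dS_neg_one (F : GoodMap) (x : ℤ → ℝ) : rho F x ≤ F.dS (x (-1)) := min_le_left _ _

theorem rho_le_dS_zero (F : GoodMap) (x : ℤ → ℝ) : rho F x ≤ F.dS (x 0) :=
  (min_le_right _ _).trans (min_le_left _ _)

theorem rho_le_dS_one (F : GoodMap) (x : ℤ → ℝ) : rho F x ≤ F.dS (x 1) :=
  (min_le_right _ _).trans (min_le_right _ _)

theorem map_of_mem_NUE {x : ℤ → ℝ} (hx : x ∈ NUE F χ) (n : ℤ) : F.f (x n) = x (n + 1) := by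
  simpa only [add_sub_cancel_right] using hx.1.2 (n + 1)

theorem isRegular_of_mem_NUE {x : ℤ → ℝ} (hx : x ∈ NUE F χ) (n : ℤ) : F.IsRegular (x n) :=
  ⟨hx.1.1 n, hx.2.1 n, map_of_mem_NUE hx n ▸ hx.2.1 (n + 1)⟩

namespace IsChart

variable {c : Chart}

theorem p_pos (hc : IsChart F χ ε c) : 0 < c.p := hc.2.1

theorem center_mem_Mset (hc : IsChart F χ ε c) : c.x 0 ∈ Mset := hc.1.1.1 0

theorem p_le_Qtilde (hc : IsChart F χ ε c) : c.p ≤ Qtilde F χ ε c.x := by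
  have hQ : {q | q ∈ Ieps ε ∧ q ≤ Qtilde F χ ε c.x}.Nonempty := by
    by_contra h
    have hpos : 0 < Qeps F χ ε c.x := hc.p_pos.trans_le hc.2.2
    rw [Qeps, not_nonempty_iff_eq_empty.1 h, Real.sSup_empty] at hpos
    exact hpos.false
  exact hc.2.2.trans (csSup_le hQ fun q hq => hq.2)

theorem p_le_mul_uPes_rpow (hε : 0 < ε) (hc : IsChart F χ ε c) :
    c.p ≤ ε ^ (3 / F.β) * uPes F.f χ c.x ^ (-(24 / F.β)) :=
  hc.p_le_Qtilde.trans (mul_le_mul_of_nonneg_left (min_le_left _ _) (rpow_nonneg hε.le _))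

theorem p_le_mul_uPes_rpow_mul_rho_rpow (hε : 0 < ε) (hc : IsChart F χ ε c) :
    c.p ≤ ε ^ (3 / F.β) *
      (uPes F.f χ (fhatI (-1) c.x) ^ (-(12 / F.β)) * rho F c.x ^ (72 * F.a / F.β)) :=
  hc.p_le_Qtilde.trans (mul_le_mul_of_nonneg_left (min_le_right _ _) (rpow_nonneg hε.le _))

theorem uPes_ne_zero (hε : 0 < ε) (hc : IsChart F χ ε c) : uPes F.f χ c.x ≠ 0 := by
  intro h
  have hp := hc.p_pos.trans_le (hc.p_le_mul_uPes_rpow hε)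
  -- `0 ^ y = 0` even for negative `y`
  rw [h, zero_rpow (by simp [F.hβ0.ne']), mul_zero] at hp
  exact hp.false

theorem uPes_fhatI_neg_one_ne_zero (hε : 0 < ε) (hc : IsChart F χ ε c) :
    uPes F.f χ (fhatI (-1) c.x) ≠ 0 := by
  intro h
  have hp := hc.p_pos.trans_le (hc.p_le_mul_uPes_rpow_mul_rho_rpow hε)
  rw [h, zero_rpow (by simp [F.hβ0.ne']), zero_mul, mul_zero] at hp
  exact hp.false

theorem rho_pos (hε : 0 < ε) (hc : IsChart F χ ε c) : 0 < rho F c.x := by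
  refine (rho_nonneg F c.x).lt_of_ne' fun h => ?_
  have hp := hc.p_pos.trans_le (hc.p_le_mul_uPes_rpow_mul_rho_rpow hε)
  have hβ := F.hβ0
  have ha := zero_lt_one.trans F.ha
  rw [h, zero_rpow (by positivity), mul_zero, mul_zero] at hp
  exact hp.false

theorem one_le_uPes (hε : 0 < ε) (hc : IsChart F χ ε c) : 1 ≤ uPes F.f χ c.x :=
  OneDim.one_le_uPes (hc.uPes_ne_zero hε)

theorem one_le_uPes_fhatI_neg_one (hε : 0 < ε) (hc : IsChart F χ ε c) :
    1 ≤ uPes F.f χ (fhatI (-1) c.x) :=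
  OneDim.one_le_uPes (hc.uPes_fhatI_neg_one_ne_zero hε)

theorem uPes_pos (hε : 0 < ε) (hc : IsChart F χ ε c) : 0 < uPes F.f χ c.x :=
  zero_lt_one.trans_le (hc.one_le_uPes hε)

theorem rho_le_one (hc : IsChart F χ ε c) : rho F c.x ≤ 1 :=
  calc rho F c.x ≤ F.dS (c.x 0) := rho_le_dS_zero F c.x
    _ ≤ 1 / 2 := F.dS_le_half hc.center_mem_Mset
    _ ≤ 1 := by norm_num

theorem uPes_mul_p_le (hε : 0 < ε) (hε1 : ε ≤ 1) (hc : IsChart F χ ε c) :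
    uPes F.f χ c.x * c.p ≤ ε := by
  have hβ := F.hβ0
  have hβ1 := F.hβ1
  rw [← le_inv_mul_iff₀ (hc.uPes_pos hε), mul_comm]
  have hεβ : ε ^ (3 / F.β) ≤ ε :=
    rpow_le_self_of_le_one hε.le hε1 (by rw [le_div_iff₀ hβ]; linarith)
  have huβ : uPes F.f χ c.x ^ (-(24 / F.β)) ≤ (uPes F.f χ c.x)⁻¹ := by
    rw [← rpow_neg_one]
    exact rpow_le_rpow_of_exponent_le (hc.one_le_uPes hε)
      (neg_le_neg (by rw [le_div_iff₀ hβ]; linarith))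
  calc c.p ≤ ε ^ (3 / F.β) * uPes F.f χ c.x ^ (-(24 / F.β)) := hc.p_le_mul_uPes_rpow hε
    _ ≤ ε * (uPes F.f χ c.x)⁻¹ :=
        mul_le_mul hεβ huβ (rpow_nonneg uPes_nonneg _) hε.le

theorem p_le (hε : 0 < ε) (hε1 : ε ≤ 1) (hc : IsChart F χ ε c) : c.p ≤ ε :=
  (le_mul_of_one_le_left hc.p_pos.le (hc.one_le_uPes hε)).trans (hc.uPes_mul_p_le hε hε1)

theorem p_le_mul_rho_rpow (hε : 0 < ε) (hε1 : ε ≤ 1) (hc : IsChart F χ ε c) :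
    c.p ≤ ε * rho F c.x ^ F.a := by
  have hβ := F.hβ0
  have hβ1 := F.hβ1
  have ha := F.ha
  have hρ := rho_nonneg F c.x
  have hεβ : ε ^ (3 / F.β) ≤ ε :=
    rpow_le_self_of_le_one hε.le hε1 (by rw [le_div_iff₀ hβ]; linarith)
  have huβ : uPes F.f χ (fhatI (-1) c.x) ^ (-(12 / F.β)) ≤ 1 :=
    rpow_le_one_of_one_le_of_nonpos (hc.one_le_uPes_fhatI_neg_one hε)
      (neg_nonpos.2 (by positivity))
  have hρβ : rho F c.x ^ (72 * F.a / F.β) ≤ rho F c.x ^ F.a :=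
    rpow_le_rpow_of_exponent_ge (hc.rho_pos hε) hc.rho_le_one
      (by rw [le_div_iff₀ hβ]; nlinarith)
  calc c.p ≤ ε ^ (3 / F.β) *
        (uPes F.f χ (fhatI (-1) c.x) ^ (-(12 / F.β)) * rho F c.x ^ (72 * F.a / F.β)) :=
        hc.p_le_mul_uPes_rpow_mul_rho_rpow hε
    _ ≤ ε * (1 * rho F c.x ^ F.a) := by
        have huβ0 := rpow_nonneg (uPes_nonneg (f := F.f) (χ := χ) (x := fhatI (-1) c.x))
          (-(12 / F.β))
        gcongr
    _ = ε * rho F c.x ^ F.a := by rw [one_mul]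

theorem uPes_fhatI_neg_one_mul_p_rpow_le (hε : 0 < ε) (hε1 : ε ≤ 1) (hc : IsChart F χ ε c) :
    uPes F.f χ (fhatI (-1) c.x) * c.p ^ F.β ≤ ε := by
  have hβ := F.hβ0
  have ha := zero_lt_one.trans F.ha
  set w := uPes F.f χ (fhatI (-1) c.x)
  have hw : 1 ≤ w := hc.one_le_uPes_fhatI_neg_one hε
  have hw0 : 0 ≤ w := zero_le_one.trans hw
  have hρβ : rho F c.x ^ (72 * F.a / F.β) ≤ 1 :=
    rpow_le_one (rho_nonneg F c.x) hc.rho_le_one (by positivity)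
  have hp : c.p ≤ ε ^ (3 / F.β) * w ^ (-(12 / F.β)) :=
    calc c.p ≤ ε ^ (3 / F.β) * (w ^ (-(12 / F.β)) * rho F c.x ^ (72 * F.a / F.β)) :=
          hc.p_le_mul_uPes_rpow_mul_rho_rpow hε
      _ ≤ ε ^ (3 / F.β) * (w ^ (-(12 / F.β)) * 1) := by gcongr
      _ = ε ^ (3 / F.β) * w ^ (-(12 / F.β)) := by rw [mul_one]
  have hpβ : c.p ^ F.β ≤ ε ^ (3 : ℝ) * w ^ (-12 : ℝ) :=
    calc c.p ^ F.β ≤ (ε ^ (3 / F.β) * w ^ (-(12 / F.β))) ^ F.β :=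
          rpow_le_rpow hc.p_pos.le hp hβ.le
      _ = ε ^ (3 / F.β * F.β) * w ^ (-(12 / F.β) * F.β) := by
          rw [mul_rpow (by positivity) (by positivity), ← rpow_mul hε.le, ← rpow_mul hw0]
      _ = ε ^ (3 : ℝ) * w ^ (-12 : ℝ) := by
          rw [neg_mul, div_mul_cancel₀ _ hβ.ne', div_mul_cancel₀ _ hβ.ne']
  have hε3 : ε ^ (3 : ℝ) ≤ ε := rpow_le_self_of_le_one hε.le hε1 (by norm_num)
  have hw12 : w ^ (-12 : ℝ) ≤ w⁻¹ := by
    rw [← rpow_neg_one]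
    exact rpow_le_rpow_of_exponent_le hw (by norm_num)
  calc w * c.p ^ F.β ≤ w * (ε * w⁻¹) := by
        gcongr
        exact hpβ.trans (by gcongr)
    _ = ε := by
        field_simp

theorem p_lt_r (hA : F.SatA) (hε : 0 < ε) (hε1 : ε ≤ 1) (hc : IsChart F χ ε c) {k : ℤ}
    (hk : rho F c.x ≤ F.dS (c.x k)) (hk1 : rho F c.x ≤ F.dS (c.x (k + 1))) :
    c.p < F.r (c.x k) := by
  have hρ := rho_nonneg F c.x
  have ha := zero_le_one.trans F.ha.le
  calc c.p ≤ ε * rho F c.x ^ F.a := hc.p_le_mul_rho_rpow hε hε1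
    _ ≤ rho F c.x ^ F.a := mul_le_of_le_one_left (by positivity) hε1
    _ ≤ min (F.dS (c.x k) ^ F.a) (F.dS (F.f (c.x k)) ^ F.a) := by
        rw [map_of_mem_NUE hc.1]
        exact le_min (by gcongr) (by gcongr)
    _ < F.r (c.x k) := hA.min_rpow_lt_r (isRegular_of_mem_NUE hc.1 k)

theorem p_lt_r_neg_one (hA : F.SatA) (hε : 0 < ε) (hε1 : ε ≤ 1) (hc : IsChart F χ ε c) :
    c.p < F.r (c.x (-1)) :=
  hc.p_lt_r hA hε hε1 (rho_le_dS_neg_one F c.x) (rho_le_dS_zero F c.x)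

theorem p_lt_r_zero (hA : F.SatA) (hε : 0 < ε) (hε1 : ε ≤ 1) (hc : IsChart F χ ε c) :
    c.p < F.r (c.x 0) :=
  hc.p_lt_r hA hε hε1 (rho_le_dS_zero F c.x) (rho_le_dS_one F c.x)

theorem mem_chartRange_iff (hε : 0 < ε) (hc : IsChart F χ ε c) {z : ℝ} :
    z ∈ chartRange F χ c ↔ uPes F.f χ c.x * |z - c.x 0| ≤ c.p := by
  have hu := hc.uPes_pos hε
  have h_abs : uPes F.f χ c.x * |z - c.x 0| = |uPes F.f χ c.x * (z - c.x 0)| := by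
    rw [abs_mul, abs_of_pos hu]
  rw [h_abs, abs_le, ← mem_Icc]
  constructor
  · rintro ⟨t, ht, rfl⟩
    rwa [Psi, add_sub_cancel_right, mul_div_cancel₀ _ hu.ne']
  · intro h
    exact ⟨_, h, by rw [Psi, mul_div_cancel_left₀ _ hu.ne', sub_add_cancel]⟩

theorem Psi_injective (hε : 0 < ε) (hc : IsChart F χ ε c) :
    Function.Injective (Psi F.f χ c.x) := fun _ _ h =>
  (div_left_inj' (hc.uPes_ne_zero hε)).1 (add_right_cancel h)

theorem chartRange_subset_closedBall (hε : 0 < ε) (hc : IsChart F χ ε c) :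
    chartRange F χ c ⊆ closedBall (c.x 0) c.p := fun _ hz =>
  (le_mul_of_one_le_left (abs_nonneg _) (hc.one_le_uPes hε)).trans
    ((hc.mem_chartRange_iff hε).1 hz)

theorem chartRange_subset_ball (hA : F.SatA) (hε : 0 < ε) (hε1 : ε ≤ 1)
    (hc : IsChart F χ ε c) : chartRange F χ c ⊆ ball (c.x 0) (2 * F.r (c.x 0)) :=
  (hc.chartRange_subset_closedBall hε).trans
    (closedBall_subset_ball (by linarith [hc.p_pos, hc.p_lt_r_zero hA hε hε1]))

theorem abs_f_sub_le (hA : F.SatA) (hε : 0 < ε) (hε1 : ε ≤ 1) (hc : IsChart F χ ε c) {z : ℝ}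
    (hz : z ∈ chartRange F χ c) : |F.f z - c.x 1| ≤ ε := by
  have ha := zero_le_one.trans F.ha.le
  have hρ := rho_nonneg F c.x
  have hd : 0 < F.dS (c.x 0) := (hc.rho_pos hε).trans_le (rho_le_dS_zero F c.x)
  have hzp : |z - c.x 0| ≤ c.p := hc.chartRange_subset_closedBall hε hz
  calc |F.f z - c.x 1| = |F.f z - F.f (c.x 0)| := by rw [map_of_mem_NUE hc.1, zero_add]
    _ ≤ F.dS (c.x 0) ^ (-F.a) * |z - c.x 0| :=
        hA.abs_f_sub_le (isRegular_of_mem_NUE hc.1 0) (hc.chartRange_subset_ball hA hε hε1 hz)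
    _ ≤ F.dS (c.x 0) ^ (-F.a) * (ε * F.dS (c.x 0) ^ F.a) := by
        gcongr
        exact hzp.trans ((hc.p_le_mul_rho_rpow hε hε1).trans
          (by gcongr; exact rho_le_dS_zero F c.x))
    _ = ε := by rw [mul_left_comm, ← rpow_add hd, neg_add_cancel, rpow_zero, mul_one]

theorem uPes_fhatI_neg_one_mul_add_le (hε : 0 < ε) (hε1 : ε ≤ 1) (hc : IsChart F χ ε c) :
    uPes F.f χ (fhatI (-1) c.x) * (|(deriv F.f (c.x (-1)))⁻¹| + F.K * c.p ^ F.β) ≤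
      (exp (-χ) + F.K * ε) * uPes F.f χ c.x := by
  have hKε : 0 ≤ F.K * ε := mul_nonneg (zero_le_one.trans F.hK.le) hε.le
  calc _ = uPes F.f χ (fhatI (-1) c.x) * |(deriv F.f (c.x (-1)))⁻¹| +
          F.K * (uPes F.f χ (fhatI (-1) c.x) * c.p ^ F.β) := by ring
    _ ≤ exp (-χ) * uPes F.f χ c.x + F.K * ε :=
        add_le_add (uPes_fhatI_neg_one_mul_le (hc.uPes_ne_zero hε))
          (mul_le_mul_of_nonneg_left (hc.uPes_fhatI_neg_one_mul_p_rpow_le hε hε1)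
            (zero_le_one.trans F.hK.le))
    _ ≤ exp (-χ) * uPes F.f χ c.x + F.K * ε * uPes F.f χ c.x :=
        add_le_add_right (le_mul_of_one_le_right hKε (hc.one_le_uPes hε)) _
    _ = (exp (-χ) + F.K * ε) * uPes F.f χ c.x := by ring

theorem abs_Gmap_sub_le (hA : F.SatA) (hε : 0 < ε) (hε1 : ε ≤ 1) (hc : IsChart F χ ε c)
    {s t : ℝ} (hs : s ∈ Icc (-c.p) c.p) (ht : t ∈ Icc (-c.p) c.p) :
    |Gmap F χ c.x s - Gmap F χ c.x t| ≤ (exp (-χ) + F.K * ε) * |s - t| := by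
  have hreg := isRegular_of_mem_NUE hc.1 (-1)
  have hu := hc.uPes_pos hε
  set u := uPes F.f χ c.x
  set w := uPes F.f χ (fhatI (-1) c.x)
  set L := |(deriv F.f (c.x (-1)))⁻¹| + F.K * c.p ^ F.β
  have mem_closedBall {t : ℝ} (ht : t ∈ Icc (-c.p) c.p) :
      Psi F.f χ c.x t ∈ closedBall (F.f (c.x (-1))) c.p := by
    rw [map_of_mem_NUE hc.1]
    exact hc.chartRange_subset_closedBall hε (mem_image_of_mem _ ht)
  have hr : c.p < 2 * F.r (c.x (-1)) := by
    linarith [hc.p_pos, hc.p_lt_r_neg_one hA hε hε1]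
  calc |Gmap F χ c.x s - Gmap F χ c.x t|
      = w * |ghat F c.x (Psi F.f χ c.x s) - ghat F c.x (Psi F.f χ c.x t)| := by
        rw [Gmap, Gmap, ← mul_sub, sub_sub_sub_cancel_right, abs_mul, abs_of_nonneg uPes_nonneg]
    _ ≤ w * (L * |Psi F.f χ c.x s - Psi F.f χ c.x t|) :=
        mul_le_mul_of_nonneg_left
          (hA.abs_g_sub_le hreg hr (mem_closedBall hs) (mem_closedBall ht)) uPes_nonneg
    _ = w * L * (|s - t| / u) := by
        rw [Psi, Psi, add_sub_add_right_eq_sub, ← sub_div, abs_div, abs_of_pos hu, mul_assoc]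
    _ ≤ (exp (-χ) + F.K * ε) * u * (|s - t| / u) :=
        mul_le_mul_of_nonneg_right (hc.uPes_fhatI_neg_one_mul_add_le hε hε1) (by positivity)
    _ = (exp (-χ) + F.K * ε) * |s - t| := by rw [mul_assoc, mul_div_cancel₀ _ hu.ne']

theorem f_ghat_Psi (hA : F.SatA) (hε : 0 < ε) (hε1 : ε ≤ 1) (hc : IsChart F χ ε c) {t : ℝ}
    (ht : t ∈ Icc (-c.p) c.p) : F.f (ghat F c.x (Psi F.f χ c.x t)) = Psi F.f χ c.x t := by
  refine hA.map_g (isRegular_of_mem_NUE hc.1 (-1)) ?_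
  rw [map_of_mem_NUE hc.1]
  exact closedBall_subset_ball (by linarith [hc.p_pos, hc.p_lt_r_neg_one hA hε hε1])
    (hc.chartRange_subset_closedBall hε (mem_image_of_mem _ ht))

end IsChart

end Charts

section WeakEdges

variable {F : GoodMap} {χ ε : ℝ}

/-- A Lipschitz constant, read in charts, of the inverse branches along weak edges: the rate
`e^{-χ} + Kε` of `Gmap`, distorted by the factor `1 + ε` of the `ε`-overlap. -/
def contractionRate (F : GoodMap) (χ ε : ℝ) : ℝ := (1 + ε) * (exp (-χ) + F.K * ε)

theorem contractionRate_nonneg (hε : 0 ≤ ε) : 0 ≤ contractionRate F χ ε := by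
  have hK := zero_le_one.trans F.hK.le
  unfold contractionRate
  positivity

namespace WeakEdge

variable {v w : Chart} {s t : ℝ}

theorem left (h : WeakEdge F χ ε v w) : IsChart F χ ε v := h.1

theorem right (h : WeakEdge F χ ε v w) : IsChart F χ ε w := h.2.1

theorem uPes_mul_overlap_le (hε : 0 < ε) (hε1 : ε ≤ 1) (h : WeakEdge F χ ε v w) :
    uPes F.f χ v.x * (|w.x (-1) - v.x 0| +
      |(uPes F.f χ (fhatI (-1) w.x))⁻¹ - (uPes F.f χ v.x)⁻¹|) ≤ ε * v.p := by
  have hp := h.left.p_pos.le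
  have hp1 : v.p ≤ 1 := (h.left.p_le hε hε1).trans hε1
  calc _ ≤ uPes F.f χ v.x * (v.p * v.p) ^ 4 :=
        mul_le_mul_of_nonneg_left h.2.2.1.2.2.le uPes_nonneg
    _ = uPes F.f χ v.x * v.p * (v.p ^ 6 * v.p) := by ring
    _ ≤ ε * (1 * v.p) := by
        gcongr
        · exact h.left.uPes_mul_p_le hε hε1
        · exact pow_le_one₀ hp hp1
    _ = ε * v.p := by rw [one_mul]

theorem uPes_mul_abs_center_sub_le (hε : 0 < ε) (hε1 : ε ≤ 1) (h : WeakEdge F χ ε v w) :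
    uPes F.f χ v.x * |w.x (-1) - v.x 0| ≤ ε * v.p :=
  (mul_le_mul_of_nonneg_left (le_add_of_nonneg_right (abs_nonneg _)) uPes_nonneg).trans
    (h.uPes_mul_overlap_le hε hε1)

theorem uPes_div_le (hε : 0 < ε) (hε1 : ε ≤ 1) (h : WeakEdge F χ ε v w) :
    uPes F.f χ v.x / uPes F.f χ (fhatI (-1) w.x) ≤ 1 + ε := by
  set b := uPes F.f χ (fhatI (-1) w.x)
  have hv := h.left.uPes_pos hε
  have hvb : uPes F.f χ v.x * (b⁻¹ - (uPes F.f χ v.x)⁻¹) ≤ ε :=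
    calc _ ≤ uPes F.f χ v.x * (|w.x (-1) - v.x 0| + |b⁻¹ - (uPes F.f χ v.x)⁻¹|) :=
          mul_le_mul_of_nonneg_left
            ((le_abs_self _).trans (le_add_of_nonneg_left (abs_nonneg _))) hv.le
      _ ≤ ε * v.p := h.uPes_mul_overlap_le hε hε1
      _ ≤ ε := mul_le_of_le_one_right hε.le ((h.left.p_le hε hε1).trans hε1)
  rw [mul_sub, mul_inv_cancel₀ hv.ne'] at hvb
  rw [div_eq_mul_inv]
  linarith

theorem abs_Gmap2_sub_le (hA : F.SatA) (hε : 0 < ε) (hε1 : ε ≤ 1) (h : WeakEdge F χ ε v w)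
    (hs : s ∈ Icc (-w.p) w.p) (ht : t ∈ Icc (-w.p) w.p) :
    |Gmap2 F χ w.x v.x s - Gmap2 F χ w.x v.x t| ≤ contractionRate F χ ε * |s - t| := by
  set b := uPes F.f χ (fhatI (-1) w.x)
  have hb : b ≠ 0 := h.right.uPes_fhatI_neg_one_ne_zero hε
  calc |Gmap2 F χ w.x v.x s - Gmap2 F χ w.x v.x t|
      = |uPes F.f χ v.x / b * (Gmap F χ w.x s - Gmap F χ w.x t)| := by
        congr 1
        simp only [Gmap, Gmap2]
        field_simp
        ring
    _ = uPes F.f χ v.x / b * |Gmap F χ w.x s - Gmap F χ w.x t| := by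
        rw [abs_mul, abs_of_nonneg (div_nonneg uPes_nonneg uPes_nonneg)]
    _ ≤ (1 + ε) * ((exp (-χ) + F.K * ε) * |s - t|) :=
        mul_le_mul (h.uPes_div_le hε hε1) (h.right.abs_Gmap_sub_le hA hε hε1 hs ht)
          (abs_nonneg _) (by positivity)
    _ = contractionRate F χ ε * |s - t| := (mul_assoc _ _ _).symm

theorem abs_Gmap2_zero_le (hA : F.SatA) (hε : 0 < ε) (hε1 : ε ≤ 1) (h : WeakEdge F χ ε v w) :
    |Gmap2 F χ w.x v.x 0| ≤ ε * v.p := by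
  have hx := h.right.1
  have ghat_center : ghat F w.x (w.x 0) = w.x (-1) := by
    rw [ghat, ← neg_add_cancel 1, ← map_of_mem_NUE hx (-1)]
    exact hA.g_map_self (isRegular_of_mem_NUE hx (-1))
  rw [Gmap2, Psi, zero_div, zero_add, ghat_center, abs_mul, abs_of_nonneg uPes_nonneg]
  exact h.uPes_mul_abs_center_sub_le hε hε1

theorem mapsTo_Gmap2 (hA : F.SatA) (hε : 0 < ε) (hε1 : ε ≤ 1)
    (hrate : contractionRate F χ ε * exp ε + ε ≤ 1) (h : WeakEdge F χ ε v w) :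
    MapsTo (Gmap2 F χ w.x v.x) (Icc (-w.p) w.p) (Icc (-v.p) v.p) := by
  intro t ht
  have hw := h.right.p_pos.le
  have hθ := contractionRate_nonneg (F := F) (χ := χ) hε.le
  rw [mem_Icc, ← abs_le] at ht ⊢
  calc |Gmap2 F χ w.x v.x t|
      ≤ |Gmap2 F χ w.x v.x t - Gmap2 F χ w.x v.x 0| + |Gmap2 F χ w.x v.x 0| := by
        linarith [abs_sub_abs_le_abs_sub (Gmap2 F χ w.x v.x t) (Gmap2 F χ w.x v.x 0)]
    _ ≤ contractionRate F χ ε * |t - 0| + ε * v.p :=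
        add_le_add
          (h.abs_Gmap2_sub_le hA hε hε1 (abs_le.1 ht) ⟨neg_nonpos.2 hw, hw⟩)
          (h.abs_Gmap2_zero_le hA hε hε1)
    _ ≤ contractionRate F χ ε * (exp ε * v.p) + ε * v.p := by
        gcongr
        rw [sub_zero]
        exact ht.trans h.2.2.2
    _ = (contractionRate F χ ε * exp ε + ε) * v.p := by ring
    _ ≤ v.p := mul_le_of_le_one_left h.left.p_pos.le hrate

theorem f_Psi_eq_iff (hA : F.SatA) (hε : 0 < ε) (hε1 : ε ≤ 1)
    (hrate : contractionRate F χ ε * exp ε + ε ≤ 1) (h : WeakEdge F χ ε v w)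
    (hs : s ∈ Icc (-v.p) v.p) (ht : t ∈ Icc (-w.p) w.p) :
    F.f (Psi F.f χ v.x s) = Psi F.f χ w.x t ↔ s = Gmap2 F χ w.x v.x t := by
  have Psi_Gmap2 : Psi F.f χ v.x (Gmap2 F χ w.x v.x t) = ghat F w.x (Psi F.f χ w.x t) := by
    rw [Psi, Gmap2, mul_div_cancel_left₀ _ (h.left.uPes_ne_zero hε), sub_add_cancel]
  have mem_ball {r : ℝ} (hr : r ∈ Icc (-v.p) v.p) :
      Psi F.f χ v.x r ∈ ball (v.x 0) (2 * F.r (v.x 0)) :=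
    h.left.chartRange_subset_ball hA hε hε1 (mem_image_of_mem _ hr)
  rw [← h.right.f_ghat_Psi hA hε hε1 ht, ← Psi_Gmap2,
    (hA.injOn_ball (isRegular_of_mem_NUE h.left.1 0)).eq_iff (mem_ball hs)
      (mem_ball (h.mapsTo_Gmap2 hA hε hε1 hrate ht)),
    (h.left.Psi_injective hε).eq_iff]

end WeakEdge

end WeakEdges

section SmallScale

variable {F : GoodMap} {χ ε : ℝ}

/-- The requirements on the scale `ε` used in the shadowing argument. The last one says that `4ε`
is too small for the image of an endpoint of `M` to be near an endpoint without being equal to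
it. -/
structure SmallScale (F : GoodMap) (χ ε : ℝ) : Prop where
  pos : 0 < ε
  le_one : ε ≤ 1
  contractionRate_mul_exp_add_le : contractionRate F χ ε * exp ε + ε ≤ 1
  f_eq_of_abs_sub_le : ∀ e ∈ ({0, 1 / 2} : Set ℝ), ∀ e' ∈ ({0, 1 / 2} : Set ℝ),
    |F.f e - e'| ≤ 4 * ε → F.f e = e'

theorem SmallScale.contractionRate_lt_one (hε : SmallScale F χ ε) : contractionRate F χ ε < 1 :=
  calc contractionRate F χ ε ≤ contractionRate F χ ε * exp ε :=
        le_mul_of_one_le_right (contractionRate_nonneg hε.pos.le) (one_le_exp hε.pos.le)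
    _ < 1 := by linarith [hε.pos, hε.contractionRate_mul_exp_add_le]

theorem eventually_contractionRate_mul_exp_add_le (F : GoodMap) (hχ : 0 < χ) :
    ∀ᶠ ε in 𝓝 (0 : ℝ), contractionRate F χ ε * exp ε + ε ≤ 1 := by
  have hcont : Continuous fun ε => contractionRate F χ ε * exp ε + ε := by
    unfold contractionRate
    fun_prop
  refine hcont.continuousAt.eventually_le_const ?_
  simpa [contractionRate] using hχ

theorem eventually_f_eq_of_abs_sub_le (F : GoodMap) :
    ∀ᶠ ε in 𝓝 (0 : ℝ), ∀ e ∈ ({0, 1 / 2} : Set ℝ), ∀ e' ∈ ({0, 1 / 2} : Set ℝ),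
      |F.f e - e'| ≤ 4 * ε → F.f e = e' := by
  refine (eventually_all_finite (toFinite _)).2 fun e _ =>
    (eventually_all_finite (toFinite _)).2 fun e' _ => ?_
  by_cases h : F.f e = e'
  · exact .of_forall fun _ _ => h
  · have hpos : 0 < |F.f e - e'| / 4 := by linarith [abs_sub_pos.2 h]
    filter_upwards [Iio_mem_nhds hpos] with ε hε hle
    linarith [mem_Iio.1 hε]

theorem eventually_smallScale (F : GoodMap) (hχ : 0 < χ) :
    ∀ᶠ ε in 𝓝[>] 0, SmallScale F χ ε := by
  filter_upwards [self_mem_nhdsWithin, nhdsWithin_le_nhds (Iic_mem_nhds zero_lt_one),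
    nhdsWithin_le_nhds (eventually_contractionRate_mul_exp_add_le F hχ),
    nhdsWithin_le_nhds (eventually_f_eq_of_abs_sub_le F)] with ε hε hε1 hrate hgap
  exact ⟨hε, hε1, hrate, hgap⟩

end SmallScale

section RealShadows

variable {F : GoodMap} {χ ε : ℝ} {v : ℤ → Chart} {y : ℤ → ℝ}

/-- A real orbit of `F.f` in the charts `v`. Unlike in `Shadows`, it may leave `M`, since chart
ranges are not contained in `M`. -/
structure IsRealShadow (F : GoodMap) (χ : ℝ) (v : ℤ → Chart) (y : ℤ → ℝ) : Prop where
  mem_chartRange : ∀ n, y n ∈ chartRange F χ (v n)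
  map_eq : ∀ n, F.f (y n) = y (n + 1)

theorem shadows_iff :
    Shadows F χ v y ↔ IsRealShadow F χ v y ∧ ∀ n, y n ∈ Mset := by
  constructor
  · rintro ⟨⟨hM, hmap⟩, hrange⟩
    exact ⟨⟨hrange, fun n => by simpa only [add_sub_cancel_right] using hmap (n + 1)⟩, hM⟩
  · rintro ⟨⟨hrange, hmap⟩, hM⟩
    exact ⟨⟨hM, fun n => by rw [hmap, sub_add_cancel]⟩, hrange⟩

theorem existsUnique_isRealShadow (hA : F.SatA) (hε : SmallScale F χ ε)
    (hv : IsWeakGPO F χ ε v) : ∃! y : ℤ → ℝ, IsRealShadow F χ v y := by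
  let X (n : ℤ) : Set ℝ := Icc (-(v n).p) (v n).p
  have mapsTo (n : ℤ) : MapsTo (Gmap2 F χ (v (n + 1)).x (v n).x) (X (n + 1)) (X n) :=
    (hv n).mapsTo_Gmap2 hA hε.pos hε.le_one hε.contractionRate_mul_exp_add_le
  have f_Psi_eq_iff (n : ℤ) (s : X n) (t : X (n + 1)) :
      F.f (Psi F.f χ (v n).x s) = Psi F.f χ (v (n + 1)).x t ↔ s = (mapsTo n).restrict _ _ _ t :=
    ((hv n).f_Psi_eq_iff hA hε.pos hε.le_one hε.contractionRate_mul_exp_add_le s.2 t.2).trans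
      (Subtype.ext_iff (a2 := (mapsTo n).restrict _ _ _ t)).symm
  have dist_le (n : ℤ) (s t : X n) : dist s t ≤ 2 := by
    have hp := ((hv n).left.p_le hε.pos hε.le_one).trans hε.le_one
    exact (Real.dist_le_of_mem_Icc s.2 t.2).trans (by linarith)
  have : ∀ n, Nonempty (X n) := fun n =>
    ⟨0, neg_nonpos.2 (hv n).left.p_pos.le, (hv n).left.p_pos.le⟩
  have : ∀ n, CompleteSpace (X n) := fun n => isClosed_Icc.completeSpace_coe
  obtain ⟨t, ht, t_unique⟩ := existsUnique_forall_eq_apply_of_lipschitzWith (· + 1) dist_le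
    (Real.toNNReal_lt_one.2 hε.contractionRate_lt_one) (fun n => (mapsTo n).restrict _ _ _)
    fun n => LipschitzWith.of_dist_le_mul fun s t => by
      rw [Real.coe_toNNReal _ (contractionRate_nonneg hε.pos.le)]
      exact (hv n).abs_Gmap2_sub_le hA hε.pos hε.le_one s.2 t.2
  refine ⟨fun n => Psi F.f χ (v n).x (t n), ⟨fun n => mem_image_of_mem _ (t n).2,
    fun n => (f_Psi_eq_iff n _ _).2 (ht n)⟩, fun y hy => funext fun n => ?_⟩
  choose s hs Psi_s using hy.mem_chartRange
  have s_eq_t : (fun n => (⟨s n, hs n⟩ : X n)) = t := t_unique _ fun n =>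
    (f_Psi_eq_iff n _ _).1 (by simpa only [Psi_s] using hy.map_eq n)
  rw [← s_eq_t, Psi_s]

end RealShadows

section Excursions

variable {F : GoodMap} {χ ε : ℝ} {v : ℤ → Chart} {y : ℤ → ℝ} {n : ℤ}

/-- The nearest-point projection onto `M`. -/
def projM (y : ℝ) : ℝ := projIcc (0 : ℝ) (1 / 2) (by norm_num) y

theorem projM_mem_Mset (y : ℝ) : projM y ∈ Mset := Subtype.prop _

theorem projM_mem_pair_of_notMem {y : ℝ} (hy : y ∉ Mset) : projM y ∈ ({0, 1 / 2} : Set ℝ) :=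
  coe_projIcc_mem_pair_of_notMem _ hy

theorem IsChart.projM_mem_chartRange {c : Chart} (hε : 0 < ε) (hc : IsChart F χ ε c) {z : ℝ}
    (hz : z ∈ chartRange F χ c) : projM z ∈ chartRange F χ c := by
  rw [hc.mem_chartRange_iff hε] at hz ⊢
  exact (mul_le_mul_of_nonneg_left (abs_coe_projIcc_sub_le _ hc.center_mem_Mset z)
    uPes_nonneg).trans hz

theorem IsChart.abs_projM_sub_self_le {c : Chart} (hε : 0 < ε) (hε1 : ε ≤ 1)
    (hc : IsChart F χ ε c) {z : ℝ} (hz : z ∈ chartRange F χ c) : |projM z - z| ≤ 2 * ε := by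
  have hp := hc.p_le hε hε1
  have hz' : |z - c.x 0| ≤ c.p := hc.chartRange_subset_closedBall hε hz
  have hproj : |projM z - c.x 0| ≤ |z - c.x 0| := abs_coe_projIcc_sub_le _ hc.center_mem_Mset z
  linarith [abs_sub_le (projM z) (c.x 0) z, abs_sub_comm z (c.x 0)]

namespace IsRealShadow

theorem f_projM_eq (hA : F.SatA) (hε : SmallScale F χ ε) (hv : IsWeakGPO F χ ε v)
    (hy : IsRealShadow F χ v y) (hn : y n ∉ Mset) (hn1 : y (n + 1) ∉ Mset) :
    F.f (projM (y n)) = projM (y (n + 1)) := by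
  refine hε.f_eq_of_abs_sub_le _ (projM_mem_pair_of_notMem hn) _ (projM_mem_pair_of_notMem hn1) ?_
  have hc := (hv n).left
  have h_proj := hc.abs_f_sub_le hA hε.pos hε.le_one
    (hc.projM_mem_chartRange hε.pos (hy.mem_chartRange n))
  have h_orbit := hc.abs_f_sub_le hA hε.pos hε.le_one (hy.mem_chartRange n)
  rw [hy.map_eq, abs_sub_comm] at h_orbit
  have h_dist := (hv n).right.abs_projM_sub_self_le hε.pos hε.le_one (hy.mem_chartRange (n + 1))
  rw [abs_sub_comm] at h_dist
  linarith [abs_sub_le (F.f (projM (y n))) ((v n).x 1) (projM (y (n + 1))),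
    abs_sub_le ((v n).x 1) (y (n + 1)) (projM (y (n + 1)))]

theorem notMem_Mset_sub_one (hy : IsRealShadow F χ v y) (hn : y n ∉ Mset) :
    y (n - 1) ∉ Mset := fun h =>
  hn (by simpa only [hy.map_eq, sub_add_cancel] using F.hmaps _ h)

theorem f_projM_mem_pair (hA : F.SatA) (hε : SmallScale F χ ε) (hv : IsWeakGPO F χ ε v)
    (hy : IsRealShadow F χ v y) (hn : y n ∉ Mset) :
    F.f (projM (y n)) ∈ ({0, 1 / 2} : Set ℝ) := by
  have hn1 := hy.notMem_Mset_sub_one hn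
  have hn2 := hy.notMem_Mset_sub_one hn1
  have h1 := hy.f_projM_eq hA hε hv hn1 (by rwa [sub_add_cancel])
  have h2 := hy.f_projM_eq hA hε hv hn2 (by rwa [sub_add_cancel])
  rw [sub_add_cancel] at h1 h2
  exact apply_mem_pair_of_two_step (projM_mem_pair_of_notMem hn2) (projM_mem_pair_of_notMem hn1)
    (projM_mem_pair_of_notMem hn) h2 h1

theorem notMem_Mset_add_one (hA : F.SatA) (hε : SmallScale F χ ε) (hv : IsWeakGPO F χ ε v)
    (hy : IsRealShadow F χ v y) (hn : y n ∉ Mset) : y (n + 1) ∉ Mset := by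
  have hc := (hv n).left
  have hreg := isRegular_of_mem_NUE hc.1 0
  have hyn := hc.chartRange_subset_ball hA hε.pos hε.le_one (hy.mem_chartRange n)
  rw [← hy.map_eq]
  refine apply_notMem_Icc_of_apply_projIcc_mem_pair (by norm_num)
    (convex_ball ((v n).x 0) (2 * F.r ((v n).x 0))).ordConnected ?_
    (fun z hz => (hA.differentiableAt hreg hz).continuousAt.continuousWithinAt)
    (hA.injOn_ball hreg) F.hmaps hyn hn (hy.f_projM_mem_pair hA hε hv hn)
  refine mem_closure_iff_nhds.1 ?_ _ (ball_mem_nhds _ (pos_of_mem_ball hyn))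
  rw [closure_Ioo (by norm_num)]
  exact hc.center_mem_Mset

theorem forall_notMem_Mset (hA : F.SatA) (hε : SmallScale F χ ε) (hv : IsWeakGPO F χ ε v)
    (hy : IsRealShadow F χ v y) (hn : y n ∉ Mset) (m : ℤ) : y m ∉ Mset :=
  Int.inductionOn' m n hn (fun _ _ => hy.notMem_Mset_add_one hA hε hv)
    fun _ _ => hy.notMem_Mset_sub_one

theorem mem_Mset (hA : F.SatA) (hε : SmallScale F χ ε) (hv : IsWeakGPO F χ ε v)
    (hy : IsRealShadow F χ v y) (n : ℤ) : y n ∈ Mset := by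
  by_contra hn
  have notMem := hy.forall_notMem_Mset hA hε hv hn
  have projM_shadow : IsRealShadow F χ v (projM ∘ y) :=
    ⟨fun m => (hv m).left.projM_mem_chartRange hε.pos (hy.mem_chartRange m),
      fun m => hy.f_projM_eq hA hε hv (notMem m) (notMem (m + 1))⟩
  have projM_comp_eq := (existsUnique_isRealShadow hA hε hv).unique projM_shadow hy
  exact hn (congrFun projM_comp_eq n ▸ projM_mem_Mset (y n))

end IsRealShadow

end Excursions

/-- shadowing lemma (Lemma 3.3): every weak ε-gpo shadows a unique point. -/
theorem shadowing_lemma (F : GoodMap) (hA : F.SatA) (χ : ℝ) (hχ : 0 < χ) :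
    ∃ ε₀ > 0, ∀ ε : ℝ, 0 < ε → ε < ε₀ →
      ∀ v : ℤ → Chart, IsWeakGPO F χ ε v → ∃! x : ℤ → ℝ, Shadows F χ v x := by
  obtain ⟨ε₀, hε₀, hsmall⟩ := mem_nhdsGT_iff_exists_Ioo_subset.1 (eventually_smallScale F hχ)
  refine ⟨ε₀, hε₀, fun ε hpos hlt v hv => ?_⟩
  have hε : SmallScale F χ ε := hsmall ⟨hpos, hlt⟩
  obtain ⟨y, hy, y_unique⟩ := existsUnique_isRealShadow hA hε hv
  exact ⟨y, shadows_iff.2 ⟨hy, hy.mem_Mset hA hε hv⟩,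
    fun z hz => y_unique z (shadows_iff.1 hz).1⟩

end OneDim
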